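/- Let A1 ∈ ℍ^{m1×p}, B1 ∈ ℍ^{q1×n1}, C1 ∈ ℍ^{m1×n1}, A2 ∈ ℍ^{m2×m1}, B2 ∈ ℍ^{q2×q1}, C2 ∈ ℍ^{m2×q1}, A3 ∈ ℍ^{m3×m2}, B3 ∈ ℍ^{q4×q2}, C3 ∈ ℍ^{m3×q2} be quaternion matrices. Define A = R_{(A2 A1)} A2, B = R_{B1} L_{(B3 B2)}, C = R_{(A2 A1)} L_{A3}, D = B2 L_{(B3 B2)}, C4 = C2 + A3⁺ C3 B2 + A2 R_{A1} C1 B1⁺, E = R_{(A2 A1)} C4 L_{(B3 B2)}, M = R_A C, N = D L_B. Then there exist quaternion matrices X ∈ ℍ^{p×n1}, Y ∈ ℍ^{m1×q1}, Z ∈ ℍ^{m2×q2}, W ∈ ℍ^{m3×q4} satisfying A1 X − Y B1 = C1, A2 Y − Z B2 = C2 and A3 Z − W B3 = C3 if and only if R_{A1} C1 L_{B1} = 0, R_{A2} C2 L_{B2} = 0, R_{A3} C3 L_{B3} = 0, R_M R_A E = 0, E L_B L_N = 0, R_A E L_D = 0, and R_C E L_B = 0. -/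

import Mathlib

open Matrix

noncomputable section

/-- `Mat a b` is the type of `a × b` matrices over the real quaternions. -/
abbrev Mat (a b : ℕ) := Matrix (Fin a) (Fin b) (Quaternion ℝ)

/-- `Ad` is a Moore–Penrose inverse of `A`: the four Penrose equations hold. -/
def IsMPInv {k l : Type*} [Fintype k] [Fintype l]
    (A : Matrix k l (Quaternion ℝ)) (Ad : Matrix l k (Quaternion ℝ)) : Prop :=
  A * Ad * A = A ∧ Ad * A * Ad = Ad ∧ (A * Ad)ᴴ = A * Ad ∧ (Ad * A)ᴴ = Ad * A

/-- The projector `L_A = I - A⁺ A`. -/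
def Lp {k l : Type*} [Fintype k] [Fintype l] [DecidableEq l]
    (A : Matrix k l (Quaternion ℝ)) (Ad : Matrix l k (Quaternion ℝ)) :
    Matrix l l (Quaternion ℝ) :=
  1 - Ad * A

/-- The projector `R_A = I - A A⁺`. -/
def Rp {k l : Type*} [Fintype k] [Fintype l] [DecidableEq k]
    (A : Matrix k l (Quaternion ℝ)) (Ad : Matrix l k (Quaternion ℝ)) :
    Matrix k k (Quaternion ℝ) :=
  1 - A * Ad

/-!
By Roth's criterion, `A X - Y B = F` is solvable in `X` and `Y` if and only if `R_A F L_B = 0`; by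
Penrose's criterion, `A X B = F` is solvable in `X` if and only if `R_A F = 0` and `F L_B = 0`.

For fixed `Y` and `Z`, the first and third equations of the system are solvable in `X` and `W`
exactly when `R_{A1} C1 L_{B1} = 0`, `R_{A3} C3 L_{B3} = 0` and, for some `U, V, S, T`,
`Y = A1 U + V R_{B1} - R_{A1} C1 B1⁺` and `Z = A3⁺ C3 + T B3 - L_{A3} S`.
The middle equation then reads `A2 A1 U - T B3 B2 = C4 - (A2 V R_{B1} + L_{A3} S B2)`, and
eliminating `U` and `T` by Roth's criterion leaves `A V B + C S D = E`.

By Penrose's criterion `V` exists if and only if `M S D = R_A E` and `C S N = E L_B`. These two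
equations for `S` have a common solution as soon as each has one, because either one forces
`M S N = R_A E L_B`, so two solutions can be glued along `N`. Penrose's criterion for each of the
two gives the last four conditions.
-/

section InnerInverse

variable {R : Type*} [Ring R]
variable {k l m n r s : Type*}

/-- `G` is an inner inverse (also `{1}`-inverse, or von Neumann inverse) of `A`. This is the first
Penrose equation, and the part of the Moore–Penrose property that governs solvability of linear
matrix equations. -/
def IsInnerInverse [Fintype m] [Fintype n] (A : Matrix m n R) (G : Matrix n m R) : Prop :=
  A * G * A = A

/-- The projector `L_A = I - G A`, which maps onto the kernel of `A` when `G` is an inner inverse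
of `A`. -/
def kerProj [Fintype m] [DecidableEq n] (A : Matrix m n R) (G : Matrix n m R) : Matrix n n R :=
  1 - G * A

/-- The projector `R_A = I - A G`, whose kernel is the range of `A` when `G` is an inner inverse
of `A`. -/
def cokerProj [Fintype n] [DecidableEq m] (A : Matrix m n R) (G : Matrix n m R) : Matrix m m R :=
  1 - A * G

theorem cokerProj_mul_eq_zero_iff [Fintype m] [Fintype n] [DecidableEq m]
    {A : Matrix m n R} {A' : Matrix n m R} {F : Matrix m k R} :
    cokerProj A A' * F = 0 ↔ A * (A' * F) = F := by
  rw [cokerProj, Matrix.sub_mul, Matrix.one_mul, sub_eq_zero, Matrix.mul_assoc, eq_comm]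

theorem mul_kerProj_eq_zero_iff [Fintype m] [Fintype n] [DecidableEq n]
    {A : Matrix m n R} {A' : Matrix n m R} {F : Matrix k n R} :
    F * kerProj A A' = 0 ↔ F * A' * A = F := by
  rw [kerProj, Matrix.mul_sub, Matrix.mul_one, sub_eq_zero, Matrix.mul_assoc, eq_comm]

namespace IsInnerInverse

section SingleMatrix

variable [Fintype m] [Fintype n] {A : Matrix m n R} {A' : Matrix n m R}

theorem cokerProj_mul [DecidableEq m] (hA : IsInnerInverse A A') : cokerProj A A' * A = 0 := by
  rw [cokerProj_mul_eq_zero_iff, ← Matrix.mul_assoc, hA]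

theorem mul_kerProj [DecidableEq n] (hA : IsInnerInverse A A') : A * kerProj A A' = 0 := by
  rw [mul_kerProj_eq_zero_iff, hA]

theorem exists_mul_left_eq_iff [DecidableEq m] (hA : IsInnerInverse A A') {F : Matrix m k R} :
    (∃ X : Matrix n k R, A * X = F) ↔ cokerProj A A' * F = 0 := by
  refine ⟨?_, fun hF ↦ ⟨A' * F, cokerProj_mul_eq_zero_iff.mp hF⟩⟩
  rintro ⟨X, rfl⟩
  rw [← Matrix.mul_assoc, hA.cokerProj_mul, Matrix.zero_mul]

theorem exists_mul_right_eq_iff [DecidableEq n] (hA : IsInnerInverse A A') {F : Matrix k n R} :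
    (∃ X : Matrix k m R, X * A = F) ↔ F * kerProj A A' = 0 := by
  refine ⟨?_, fun hF ↦ ⟨F * A', mul_kerProj_eq_zero_iff.mp hF⟩⟩
  rintro ⟨X, rfl⟩
  rw [Matrix.mul_assoc, hA.mul_kerProj, Matrix.mul_zero]

theorem exists_mul_eq_mul_and_mul_eq_mul [Fintype l] (hA : IsInnerInverse A A')
    {M : Matrix k l R} {Y Z : Matrix l m R} (h : M * Y * A = M * Z * A) :
    ∃ S : Matrix l m R, M * S = M * Y ∧ S * A = Z * A := by
  refine ⟨Y + (Z - Y) * A * A', ?_, ?_⟩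
  · have hMA : M * (Z - Y) * A = 0 := by rw [Matrix.mul_sub, Matrix.sub_mul, h, sub_self]
    rw [Matrix.mul_add, ← Matrix.mul_assoc, ← Matrix.mul_assoc, hMA, Matrix.zero_mul, add_zero]
  · rw [Matrix.add_mul, Matrix.mul_assoc (Z - Y), Matrix.mul_assoc (Z - Y), hA, Matrix.sub_mul,
      add_sub_cancel]

end SingleMatrix

section TwoMatrices

variable [Fintype k] [Fintype l] [Fintype m] [Fintype n] [DecidableEq k] [DecidableEq n]
  {A : Matrix k l R} {A' : Matrix l k R} {B : Matrix m n R} {B' : Matrix n m R} {F : Matrix k n R}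

theorem exists_mul_mul_eq_iff (hA : IsInnerInverse A A') (hB : IsInnerInverse B B') :
    (∃ X : Matrix l m R, A * X * B = F) ↔ cokerProj A A' * F = 0 ∧ F * kerProj B B' = 0 := by
  rw [← hA.exists_mul_left_eq_iff, ← hB.exists_mul_right_eq_iff]
  constructor
  · rintro ⟨X, hX⟩
    exact ⟨⟨X * B, by rw [← Matrix.mul_assoc, hX]⟩, ⟨A * X, hX⟩⟩
  · rintro ⟨hAF, hFB⟩
    rw [hA.exists_mul_left_eq_iff, cokerProj_mul_eq_zero_iff] at hAF
    rw [hB.exists_mul_right_eq_iff, mul_kerProj_eq_zero_iff] at hFB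
    exact ⟨A' * F * B', by rw [← Matrix.mul_assoc A, hAF, hFB]⟩

theorem cokerProj_mul_mul_kerProj_of_mul_sub_mul_eq (hA : IsInnerInverse A A')
    (hB : IsInnerInverse B B') {X : Matrix l n R} {Y : Matrix k m R} (h : A * X - Y * B = F) :
    cokerProj A A' * F * kerProj B B' = 0 := by
  rw [← h, Matrix.mul_sub, ← Matrix.mul_assoc, hA.cokerProj_mul, Matrix.zero_mul, zero_sub,
    Matrix.neg_mul, Matrix.mul_assoc, Matrix.mul_assoc, hB.mul_kerProj, Matrix.mul_zero,
    Matrix.mul_zero, neg_zero]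

theorem exists_mul_sub_mul_eq_iff_left [DecidableEq m] (hA : IsInnerInverse A A')
    (hB : IsInnerInverse B B') {Y : Matrix k m R} :
    (∃ X : Matrix l n R, A * X - Y * B = F) ↔
      cokerProj A A' * F * kerProj B B' = 0 ∧
        ∃ (U : Matrix l m R) (V : Matrix k m R),
          A * U + V * cokerProj B B' - cokerProj A A' * F * B' = Y := by
  constructor
  · rintro ⟨X, hX⟩
    have hRF : cokerProj A A' * F = -(cokerProj A A' * Y * B) := by
      rw [← hX, Matrix.mul_sub, ← Matrix.mul_assoc, hA.cokerProj_mul, Matrix.zero_mul, zero_sub,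
        Matrix.mul_assoc]
    refine ⟨hA.cokerProj_mul_mul_kerProj_of_mul_sub_mul_eq hB hX, A' * (Y * (B * B')), Y, ?_⟩
    rw [hRF]
    simp only [cokerProj, Matrix.mul_sub, Matrix.sub_mul, Matrix.mul_one, Matrix.one_mul,
      Matrix.mul_assoc, Matrix.neg_mul]
    abel
  · rintro ⟨hF, U, V, rfl⟩
    refine ⟨A' * F + U * B, ?_⟩
    rw [Matrix.sub_mul, Matrix.add_mul, Matrix.mul_assoc V, hB.cokerProj_mul,
      mul_kerProj_eq_zero_iff.mp hF]
    simp only [cokerProj, Matrix.mul_add, Matrix.sub_mul, Matrix.one_mul, Matrix.mul_zero,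
      Matrix.mul_assoc]
    abel

theorem exists_mul_sub_mul_eq_iff_right [DecidableEq l] (hA : IsInnerInverse A A')
    (hB : IsInnerInverse B B') {Z : Matrix l n R} :
    (∃ W : Matrix k m R, A * Z - W * B = F) ↔
      cokerProj A A' * F * kerProj B B' = 0 ∧
        ∃ (S : Matrix l n R) (T : Matrix l m R), A' * F + T * B - kerProj A A' * S = Z := by
  constructor
  · rintro ⟨W, hW⟩
    refine ⟨hA.cokerProj_mul_mul_kerProj_of_mul_sub_mul_eq hB hW, -Z, A' * W, ?_⟩
    rw [← hW]
    simp only [kerProj, Matrix.mul_sub, Matrix.sub_mul, Matrix.one_mul, Matrix.mul_neg,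
      Matrix.mul_assoc]
    abel
  · rintro ⟨hF, S, T, rfl⟩
    refine ⟨A * T - cokerProj A A' * F * B', ?_⟩
    rw [Matrix.mul_sub A, Matrix.sub_mul _ _ B, ← Matrix.mul_assoc A (kerProj A A'),
      hA.mul_kerProj, mul_kerProj_eq_zero_iff.mp hF]
    simp only [cokerProj, Matrix.mul_add, Matrix.sub_mul, Matrix.one_mul, Matrix.zero_mul,
      Matrix.mul_assoc]
    abel

theorem exists_mul_sub_mul_eq_iff (hA : IsInnerInverse A A') (hB : IsInnerInverse B B') :
    (∃ (X : Matrix l n R) (Y : Matrix k m R), A * X - Y * B = F) ↔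
      cokerProj A A' * F * kerProj B B' = 0 := by
  classical
  rw [exists_comm]
  simp only [hA.exists_mul_sub_mul_eq_iff_left hB, exists_and_left, and_iff_left_iff_imp]
  exact fun _ ↦ ⟨_, 0, 0, rfl⟩

end TwoMatrices

theorem exists_mul_mul_eq_and_mul_mul_eq_iff [Fintype k] [Fintype l] [Fintype m] [Fintype n]
    [Fintype s] {P : Matrix r k R} {C : Matrix k l R} {D : Matrix m n R} {Q : Matrix n s R}
    {N' : Matrix s m R} (hN : IsInnerInverse (D * Q) N') {F : Matrix r n R} {G : Matrix k s R}
    (hFG : F * Q = P * G) :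
    (∃ S : Matrix l m R, P * C * S * D = F ∧ C * S * (D * Q) = G) ↔
      (∃ S : Matrix l m R, P * C * S * D = F) ∧ ∃ S : Matrix l m R, C * S * (D * Q) = G := by
  refine ⟨fun ⟨S, hF, hG⟩ ↦ ⟨⟨S, hF⟩, ⟨S, hG⟩⟩, ?_⟩
  rintro ⟨⟨Y, hY⟩, ⟨Z, hZ⟩⟩
  have hYZ : P * C * Y * (D * Q) = P * C * Z * (D * Q) := by
    rw [← Matrix.mul_assoc, hY, hFG, ← hZ]
    simp only [Matrix.mul_assoc]
  obtain ⟨S, hSY, hSZ⟩ := hN.exists_mul_eq_mul_and_mul_eq_mul hYZ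
  exact ⟨S, by rw [hSY, hY], by rw [Matrix.mul_assoc, hSZ, ← Matrix.mul_assoc, hZ]⟩

section TwoSidedPair

variable [Fintype k] [Fintype l] [Fintype m] [Fintype n] [Fintype r] [Fintype s]
  [DecidableEq k] [DecidableEq n]
  {A : Matrix k l R} {A' : Matrix l k R} {B : Matrix m n R} {B' : Matrix n m R}
  {C : Matrix k r R} {D : Matrix s n R} {E : Matrix k n R}

theorem exists_mul_mul_add_mul_mul_eq_iff_left (hA : IsInnerInverse A A')
    (hB : IsInnerInverse B B') {S : Matrix r s R} :
    (∃ V : Matrix l m R, A * V * B + C * S * D = E) ↔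
      cokerProj A A' * C * S * D = cokerProj A A' * E ∧
        C * S * (D * kerProj B B') = E * kerProj B B' := by
  simp only [← eq_sub_iff_add_eq]
  rw [hA.exists_mul_mul_eq_iff hB, Matrix.mul_sub, Matrix.sub_mul, sub_eq_zero, sub_eq_zero,
    @eq_comm _ (_ * E), @eq_comm _ (E * _)]
  simp only [Matrix.mul_assoc]

theorem exists_mul_mul_add_mul_mul_eq_iff (hA : IsInnerInverse A A') (hB : IsInnerInverse B B')
    {C' : Matrix r k R} (hC : IsInnerInverse C C') {D' : Matrix n s R} (hD : IsInnerInverse D D')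
    {M' : Matrix r k R} (hM : IsInnerInverse (cokerProj A A' * C) M')
    {N' : Matrix n s R} (hN : IsInnerInverse (D * kerProj B B') N') :
    (∃ (V : Matrix l m R) (S : Matrix r s R), A * V * B + C * S * D = E) ↔
      cokerProj (cokerProj A A' * C) M' * cokerProj A A' * E = 0 ∧
        E * kerProj B B' * kerProj (D * kerProj B B') N' = 0 ∧
        cokerProj A A' * E * kerProj D D' = 0 ∧ cokerProj C C' * E * kerProj B B' = 0 := by
  have hE : cokerProj A A' * E * kerProj B B' = cokerProj A A' * (E * kerProj B B') :=
    Matrix.mul_assoc _ _ _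
  rw [exists_comm]
  simp only [hA.exists_mul_mul_add_mul_mul_eq_iff_left hB]
  rw [hN.exists_mul_mul_eq_and_mul_mul_eq_iff hE, hM.exists_mul_mul_eq_iff hD,
    hC.exists_mul_mul_eq_iff hN]
  simp only [Matrix.mul_assoc]
  tauto

end TwoSidedPair

end IsInnerInverse

section CoupledSystem

variable {k₁ l₁ m₁ n₁ k₂ m₂ k₃ m₃ : Type*}
  [Fintype k₁] [Fintype l₁] [Fintype m₁] [Fintype k₂] [Fintype m₂] [Fintype m₃]
  [DecidableEq m₁] [DecidableEq k₂]
  {A₁ : Matrix k₁ l₁ R} {A₂ : Matrix k₂ k₁ R} {P' : Matrix l₁ k₂ R}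
  {B₂ : Matrix m₂ m₁ R} {B₃ : Matrix m₃ m₂ R} {Q' : Matrix m₁ m₃ R} {C₂ : Matrix k₂ m₁ R}

theorem exists_mul_add_sub_add_mul_eq_iff (hP : IsInnerInverse (A₂ * A₁) P')
    (hQ : IsInnerInverse (B₃ * B₂) Q') {Y Y₀ : Matrix k₁ m₁ R} {Z Z₀ : Matrix k₂ m₂ R} :
    (∃ (U : Matrix l₁ m₁ R) (T : Matrix k₂ m₃ R),
        A₂ * (A₁ * U + Y - Y₀) - (Z₀ + T * B₃ - Z) * B₂ = C₂) ↔
      cokerProj (A₂ * A₁) P' * (A₂ * Y + Z * B₂) * kerProj (B₃ * B₂) Q' =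
        cokerProj (A₂ * A₁) P' * (C₂ + Z₀ * B₂ + A₂ * Y₀) * kerProj (B₃ * B₂) Q' := by
  have hUT (U : Matrix l₁ m₁ R) (T : Matrix k₂ m₃ R) :
      A₂ * (A₁ * U + Y - Y₀) - (Z₀ + T * B₃ - Z) * B₂ = C₂ ↔
        A₂ * A₁ * U - T * (B₃ * B₂) = C₂ + Z₀ * B₂ + A₂ * Y₀ - (A₂ * Y + Z * B₂) := by
    rw [← sub_eq_zero, iff_comm, ← sub_eq_zero]
    congr! 1
    simp only [Matrix.mul_add, Matrix.mul_sub, Matrix.add_mul, Matrix.sub_mul, Matrix.mul_assoc]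
    abel
  simp only [hUT]
  rw [hP.exists_mul_sub_mul_eq_iff hQ, Matrix.mul_sub, Matrix.sub_mul, sub_eq_zero, eq_comm]

variable [Fintype n₁] [Fintype k₃] [DecidableEq k₁] [DecidableEq n₁] [DecidableEq m₂]
  [DecidableEq k₃]

theorem exists_coupled_sylvester_iff
    {A₁' : Matrix l₁ k₁ R} (hA₁ : IsInnerInverse A₁ A₁')
    {B₁ : Matrix m₁ n₁ R} {B₁' : Matrix n₁ m₁ R} (hB₁ : IsInnerInverse B₁ B₁')
    {A₃ : Matrix k₃ k₂ R} {A₃' : Matrix k₂ k₃ R} (hA₃ : IsInnerInverse A₃ A₃')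
    {B₃' : Matrix m₂ m₃ R} (hB₃ : IsInnerInverse B₃ B₃')
    (hP : IsInnerInverse (A₂ * A₁) P') (hQ : IsInnerInverse (B₃ * B₂) Q')
    {C₁ : Matrix k₁ n₁ R} {C₃ : Matrix k₃ m₂ R} :
    (∃ (X : Matrix l₁ n₁ R) (Y : Matrix k₁ m₁ R) (Z : Matrix k₂ m₂ R) (W : Matrix k₃ m₃ R),
        A₁ * X - Y * B₁ = C₁ ∧ A₂ * Y - Z * B₂ = C₂ ∧ A₃ * Z - W * B₃ = C₃) ↔
      cokerProj A₁ A₁' * C₁ * kerProj B₁ B₁' = 0 ∧ cokerProj A₃ A₃' * C₃ * kerProj B₃ B₃' = 0 ∧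
        ∃ (V : Matrix k₁ m₁ R) (S : Matrix k₂ m₂ R),
          cokerProj (A₂ * A₁) P' * A₂ * V * (cokerProj B₁ B₁' * kerProj (B₃ * B₂) Q') +
              cokerProj (A₂ * A₁) P' * kerProj A₃ A₃' * S * (B₂ * kerProj (B₃ * B₂) Q') =
            cokerProj (A₂ * A₁) P' *
              (C₂ + A₃' * C₃ * B₂ + A₂ * (cokerProj A₁ A₁' * C₁ * B₁')) *
                kerProj (B₃ * B₂) Q' := by
  have hVS (V : Matrix k₁ m₁ R) (S : Matrix k₂ m₂ R) :
      cokerProj (A₂ * A₁) P' * A₂ * V * (cokerProj B₁ B₁' * kerProj (B₃ * B₂) Q') +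
          cokerProj (A₂ * A₁) P' * kerProj A₃ A₃' * S * (B₂ * kerProj (B₃ * B₂) Q') =
        cokerProj (A₂ * A₁) P' * (A₂ * (V * cokerProj B₁ B₁') + kerProj A₃ A₃' * S * B₂) *
          kerProj (B₃ * B₂) Q' := by
    simp only [Matrix.mul_add, Matrix.add_mul, Matrix.mul_assoc]
  simp only [hVS, ← exists_mul_add_sub_add_mul_eq_iff hP hQ]
  constructor
  · rintro ⟨X, Y, Z, W, h₁, h₂, h₃⟩
    obtain ⟨hC₁, U, V, rfl⟩ := (hA₁.exists_mul_sub_mul_eq_iff_left hB₁).mp ⟨X, h₁⟩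
    obtain ⟨hC₃, S, T, rfl⟩ := (hA₃.exists_mul_sub_mul_eq_iff_right hB₃).mp ⟨W, h₃⟩
    exact ⟨hC₁, hC₃, V, S, U, T, h₂⟩
  · rintro ⟨hC₁, hC₃, V, S, U, T, h₂⟩
    obtain ⟨X, h₁⟩ := (hA₁.exists_mul_sub_mul_eq_iff_left hB₁).mpr ⟨hC₁, U, V, rfl⟩
    obtain ⟨W, h₃⟩ := (hA₃.exists_mul_sub_mul_eq_iff_right hB₃).mpr ⟨hC₃, S, T, rfl⟩
    exact ⟨X, _, _, W, h₁, h₂, h₃⟩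

end CoupledSystem

theorem stmt_15_general {m1 p q1 n1 m2 q2 m3 q4 : Type*}
    [Fintype m1] [Fintype p] [Fintype q1] [Fintype n1]
    [Fintype m2] [Fintype q2] [Fintype m3] [Fintype q4]
    [DecidableEq m1] [DecidableEq q1] [DecidableEq n1]
    [DecidableEq m2] [DecidableEq q2] [DecidableEq m3]
    {A1 : Matrix m1 p R} {A1' : Matrix p m1 R} (hA1 : IsInnerInverse A1 A1')
    {B1 : Matrix q1 n1 R} {B1' : Matrix n1 q1 R} (hB1 : IsInnerInverse B1 B1')
    {C1 : Matrix m1 n1 R}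
    {A2 : Matrix m2 m1 R} {A2' : Matrix m1 m2 R} (hA2 : IsInnerInverse A2 A2')
    {B2 : Matrix q2 q1 R} {B2' : Matrix q1 q2 R} (hB2 : IsInnerInverse B2 B2')
    {C2 : Matrix m2 q1 R}
    {A3 : Matrix m3 m2 R} {A3' : Matrix m2 m3 R} (hA3 : IsInnerInverse A3 A3')
    {B3 : Matrix q4 q2 R} {B3' : Matrix q2 q4 R} (hB3 : IsInnerInverse B3 B3')
    {C3 : Matrix m3 q2 R}
    {A21 : Matrix m2 p R} (hA21 : A21 = A2 * A1)
    {A21' : Matrix p m2 R} (hA21' : IsInnerInverse A21 A21')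
    {B32 : Matrix q4 q1 R} (hB32 : B32 = B3 * B2)
    {B32' : Matrix q1 q4 R} (hB32' : IsInnerInverse B32 B32')
    {A : Matrix m2 m1 R} (hA : A = cokerProj A21 A21' * A2)
    {A' : Matrix m1 m2 R} (hA' : IsInnerInverse A A')
    {B : Matrix q1 q1 R} (hB : B = cokerProj B1 B1' * kerProj B32 B32')
    {B' : Matrix q1 q1 R} (hB' : IsInnerInverse B B')
    {C : Matrix m2 m2 R} (hC : C = cokerProj A21 A21' * kerProj A3 A3')
    {C' : Matrix m2 m2 R} (hC' : IsInnerInverse C C')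
    {D : Matrix q2 q1 R} (hD : D = B2 * kerProj B32 B32')
    {D' : Matrix q1 q2 R} (hD' : IsInnerInverse D D')
    {C4 : Matrix m2 q1 R} (hC4 : C4 = C2 + A3' * C3 * B2 + A2 * cokerProj A1 A1' * C1 * B1')
    {E : Matrix m2 q1 R} (hE : E = cokerProj A21 A21' * C4 * kerProj B32 B32')
    {M : Matrix m2 m2 R} (hM : M = cokerProj A A' * C)
    {M' : Matrix m2 m2 R} (hM' : IsInnerInverse M M')
    {N : Matrix q2 q1 R} (hN : N = D * kerProj B B')
    {N' : Matrix q1 q2 R} (hN' : IsInnerInverse N N') :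
    (∃ (X : Matrix p n1 R) (Y : Matrix m1 q1 R) (Z : Matrix m2 q2 R) (W : Matrix m3 q4 R),
        A1 * X - Y * B1 = C1 ∧ A2 * Y - Z * B2 = C2 ∧ A3 * Z - W * B3 = C3) ↔
      (cokerProj A1 A1' * C1 * kerProj B1 B1' = 0 ∧ cokerProj A2 A2' * C2 * kerProj B2 B2' = 0 ∧
        cokerProj A3 A3' * C3 * kerProj B3 B3' = 0 ∧
        cokerProj M M' * cokerProj A A' * E = 0 ∧ E * kerProj B B' * kerProj N N' = 0 ∧
        cokerProj A A' * E * kerProj D D' = 0 ∧ cokerProj C C' * E * kerProj B B' = 0) := by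
  subst hM hN
  have hpair := hA'.exists_mul_mul_add_mul_mul_eq_iff hB' (E := E) hC' hD' hM' hN'
  subst hA hB hC hD hE hC4 hA21 hB32
  have hsystem := exists_coupled_sylvester_iff hA1 hB1 hA3 hB3 hA21' hB32'
    (C₁ := C1) (C₂ := C2) (C₃ := C3)
  rw [← Matrix.mul_assoc A2, ← Matrix.mul_assoc A2, hpair] at hsystem
  constructor
  · intro h
    obtain ⟨hC1, hC3, hE⟩ := hsystem.mp h
    obtain ⟨_, Y, Z, _, _, hYZ, _⟩ := h
    exact ⟨hC1, hA2.cokerProj_mul_mul_kerProj_of_mul_sub_mul_eq hB2 hYZ, hC3, hE⟩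
  · rintro ⟨hC1, -, hC3, hE⟩
    exact hsystem.mpr ⟨hC1, hC3, hE⟩

end InnerInverse

theorem stmt_15 {m1 p q1 n1 m2 q2 m3 q4 : ℕ}
    (A1 : Mat m1 p) (A1d : Mat p m1) (hA1 : IsMPInv A1 A1d)
    (B1 : Mat q1 n1) (B1d : Mat n1 q1) (hB1 : IsMPInv B1 B1d)
    (C1 : Mat m1 n1)
    (A2 : Mat m2 m1) (A2d : Mat m1 m2) (hA2 : IsMPInv A2 A2d)
    (B2 : Mat q2 q1) (B2d : Mat q1 q2) (hB2 : IsMPInv B2 B2d)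
    (C2 : Mat m2 q1)
    (A3 : Mat m3 m2) (A3d : Mat m2 m3) (hA3 : IsMPInv A3 A3d)
    (B3 : Mat q4 q2) (B3d : Mat q2 q4) (hB3 : IsMPInv B3 B3d)
    (C3 : Mat m3 q2)
    (A21 : Mat m2 p) (hA21 : A21 = A2 * A1)
    (A21d : Mat p m2) (hA21d : IsMPInv A21 A21d)
    (B32 : Mat q4 q1) (hB32 : B32 = B3 * B2)
    (B32d : Mat q1 q4) (hB32d : IsMPInv B32 B32d)
    (A : Mat m2 m1) (hA : A = Rp A21 A21d * A2)
    (Ad : Mat m1 m2) (hAd : IsMPInv A Ad)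
    (B : Mat q1 q1) (hB : B = Rp B1 B1d * Lp B32 B32d)
    (Bd : Mat q1 q1) (hBd : IsMPInv B Bd)
    (C : Mat m2 m2) (hC : C = Rp A21 A21d * Lp A3 A3d)
    (Cd : Mat m2 m2) (hCd : IsMPInv C Cd)
    (D : Mat q2 q1) (hD : D = B2 * Lp B32 B32d)
    (Dd : Mat q1 q2) (hDd : IsMPInv D Dd)
    (C4 : Mat m2 q1)
    (hC4 : C4 = C2 + A3d * C3 * B2 + A2 * Rp A1 A1d * C1 * B1d)
    (E : Mat m2 q1) (hE : E = Rp A21 A21d * C4 * Lp B32 B32d)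
    (MM : Mat m2 m2) (hMM : MM = Rp A Ad * C)
    (MMd : Mat m2 m2) (hMMd : IsMPInv MM MMd)
    (NN : Mat q2 q1) (hNN : NN = D * Lp B Bd)
    (NNd : Mat q1 q2) (hNNd : IsMPInv NN NNd) :
    (∃ (X : Mat p n1) (Y : Mat m1 q1) (Z : Mat m2 q2) (W : Mat m3 q4),
        A1 * X - Y * B1 = C1 ∧ A2 * Y - Z * B2 = C2 ∧ A3 * Z - W * B3 = C3) ↔
      (Rp A1 A1d * C1 * Lp B1 B1d = 0 ∧ Rp A2 A2d * C2 * Lp B2 B2d = 0 ∧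
        Rp A3 A3d * C3 * Lp B3 B3d = 0 ∧
        Rp MM MMd * Rp A Ad * E = 0 ∧ E * Lp B Bd * Lp NN NNd = 0 ∧
        Rp A Ad * E * Lp D Dd = 0 ∧ Rp C Cd * E * Lp B Bd = 0) :=
  stmt_15_general hA1.1 hB1.1 hA2.1 hB2.1 hA3.1 hB3.1 hA21 hA21d.1 hB32 hB32d.1 hA hAd.1
    hB hBd.1 hC hCd.1 hD hDd.1 hC4 hE hMM hMMd.1 hNN hNNd.1
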